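/- arXiv:alg-geom/9403014 — 2 statements merged into one kernel-verified Lean document; each statement's English description precedes it below -/
import Mathlib

section
/- Let E and F be θ-stable representations of the quiver Q over k (so in particular Σ_{i∈Q₀} θ_i dim_k E_i = 0 = Σ_{i∈Q₀} θ_i dim_k F_i). Then every nonzero morphism of representations f : E → F is an isomorphism, i.e., each component f_i : E_i → F_i is bijective. -/
/-!
A morphism between semistable representations has a kernel and an image of nonnegative weight, and
by rank-nullity these weights add up to the weight `0` of the source, so both vanish. In a stable
representation the only subrepresentations of weight zero are `⊥` and `⊤`; for a nonzero morphism
the kernel is not `⊤` and the image is not `⊥`.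
-/

namespace QuiverRep

section Defs

variable {R Q₀ Q₁ A : Type*} [Ring R] {t h : Q₁ → Q₀}
  {E : Q₀ → Type*} [∀ i, AddCommGroup (E i)] [∀ i, Module R (E i)]
  {F : Q₀ → Type*} [∀ i, AddCommGroup (F i)] [∀ i, Module R (F i)]

/-- Subrepresentations of `(E, φ)`, encoded as families of submodules preserved by the arrows. -/
def IsSubrep (φ : ∀ a, E (t a) →ₗ[R] E (h a)) (E' : ∀ i, Submodule R (E i)) : Prop :=
  ∀ a, (E' (t a)).map (φ a) ≤ E' (h a)

/-- Morphisms of representations `(E, φ) → (F, ψ)`, encoded as families of linear maps commuting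
with the arrows. -/
def IsRepHom (φ : ∀ a, E (t a) →ₗ[R] E (h a)) (ψ : ∀ a, F (t a) →ₗ[R] F (h a))
    (f : ∀ i, E i →ₗ[R] F i) : Prop :=
  ∀ a, f (h a) ∘ₗ φ a = ψ a ∘ₗ f (t a)

variable [Fintype Q₀] [AddCommMonoid A]

/-- The `θ`-weight `∑ i, θ i * dim E' i` of a family of submodules. Only multiples by natural
numbers occur, so `θ` may take values in any additive commutative monoid. Submodules of infinite
rank contribute `0`, the junk value of `finrank`. -/
noncomputable def weight (θ : Q₀ → A) (E' : ∀ i, Submodule R (E i)) : A :=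
  ∑ i, Module.finrank R (E' i) • θ i

variable [PartialOrder A]

/-- King's `θ`-semistability: total weight zero, and no subrepresentation of negative weight. -/
structure IsSemistable (θ : Q₀ → A) (φ : ∀ a, E (t a) →ₗ[R] E (h a)) : Prop where
  weight_top : weight θ (⊤ : ∀ i, Submodule R (E i)) = 0
  weight_nonneg : ∀ E', IsSubrep φ E' → 0 ≤ weight θ E'

/-- King's `θ`-stability: total weight zero, and proper nonzero subrepresentations have positive
weight. The zero representation counts as stable. -/
structure IsStable (θ : Q₀ → A) (φ : ∀ a, E (t a) →ₗ[R] E (h a)) : Prop where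
  weight_top : weight θ (⊤ : ∀ i, Submodule R (E i)) = 0
  weight_pos : ∀ E', IsSubrep φ E' → E' ≠ ⊥ → E' ≠ ⊤ → 0 < weight θ E'

end Defs

section Morphisms

variable {R Q₀ Q₁ : Type*} [Ring R] {t h : Q₁ → Q₀}
  {E : Q₀ → Type*} [∀ i, AddCommGroup (E i)] [∀ i, Module R (E i)]
  {F : Q₀ → Type*} [∀ i, AddCommGroup (F i)] [∀ i, Module R (F i)]
  {φ : ∀ a, E (t a) →ₗ[R] E (h a)} {ψ : ∀ a, F (t a) →ₗ[R] F (h a)} {f : ∀ i, E i →ₗ[R] F i}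

theorem IsRepHom.isSubrep_ker (hf : IsRepHom φ ψ f) : IsSubrep φ fun i => (f i).ker := by
  intro a
  rw [Submodule.map_le_iff_le_comap, ← LinearMap.ker_comp, hf a]
  exact LinearMap.ker_le_ker_comp _ _

theorem IsRepHom.isSubrep_range (hf : IsRepHom φ ψ f) : IsSubrep ψ fun i => (f i).range := by
  intro a
  rw [← LinearMap.range_comp, ← hf a]
  exact LinearMap.range_comp_le_range _ _

end Morphisms

section Stability

variable {R Q₀ Q₁ A : Type*} [Ring R] {t h : Q₁ → Q₀} [Fintype Q₀] [AddCommMonoid A]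
  {E : Q₀ → Type*} [∀ i, AddCommGroup (E i)] [∀ i, Module R (E i)]
  {θ : Q₀ → A} {φ : ∀ a, E (t a) →ₗ[R] E (h a)} {E' : ∀ i, Submodule R (E i)}

theorem weight_bot [Nontrivial R] : weight θ (⊥ : ∀ i, Submodule R (E i)) = 0 := by
  simp [weight]

variable [PartialOrder A]

theorem IsStable.isSemistable [Nontrivial R] (hE : IsStable θ φ) : IsSemistable θ φ where
  weight_top := hE.weight_top
  weight_nonneg E' hE' := by
    by_cases h_bot : E' = ⊥
    · exact (h_bot ▸ weight_bot).ge
    by_cases h_top : E' = ⊤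
    · exact (h_top ▸ hE.weight_top).ge
    exact (hE.weight_pos E' hE' h_bot h_top).le

theorem IsStable.eq_bot_or_eq_top_of_weight_eq_zero (hE : IsStable θ φ) (hE' : IsSubrep φ E')
    (h_weight : weight θ E' = 0) : E' = ⊥ ∨ E' = ⊤ := by
  by_contra! h_proper
  exact (hE.weight_pos E' hE' h_proper.1 h_proper.2).ne' h_weight

end Stability

section Semiring

variable {R Q₀ Q₁ A : Type*} [Ring R] {t h : Q₁ → Q₀} [Fintype Q₀]
  {E : Q₀ → Type*} [∀ i, AddCommGroup (E i)] [∀ i, Module R (E i)]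

theorem weight_eq_sum_mul_finrank [NonAssocSemiring A] (θ : Q₀ → A)
    (E' : ∀ i, Submodule R (E i)) :
    weight θ E' = ∑ i, θ i * (Module.finrank R (E' i) : A) := by
  simp only [weight, nsmul_eq_mul, Nat.cast_comm]

theorem isStable_iff_sum_mul_finrank [NonAssocSemiring A] [PartialOrder A] {θ : Q₀ → A}
    {φ : ∀ a, E (t a) →ₗ[R] E (h a)} :
    IsStable θ φ ↔ ∑ i, θ i * (Module.finrank R (E i) : A) = 0 ∧
      ∀ E', IsSubrep φ E' → E' ≠ ⊥ → E' ≠ ⊤ → 0 < ∑ i, θ i * (Module.finrank R (E' i) : A) := by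
  have h_top : weight θ (⊤ : ∀ i, Submodule R (E i)) =
      ∑ i, θ i * (Module.finrank R (E i) : A) := by
    simp only [weight_eq_sum_mul_finrank, Pi.top_apply, finrank_top]
  simp only [← h_top, ← weight_eq_sum_mul_finrank]
  exact ⟨fun hE => ⟨hE.weight_top, hE.weight_pos⟩, fun hE => ⟨hE.1, hE.2⟩⟩

end Semiring

section SchurLemma

attribute [local instance] nontrivial_of_invariantBasisNumber

universe u

variable {R Q₀ Q₁ A : Type*} [Ring R] [HasRankNullity.{u} R] [StrongRankCondition R]
  {t h : Q₁ → Q₀} [Fintype Q₀]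
  {E : Q₀ → Type u} [∀ i, AddCommGroup (E i)] [∀ i, Module R (E i)] [∀ i, Module.Finite R (E i)]
  {F : Q₀ → Type*} [∀ i, AddCommGroup (F i)] [∀ i, Module R (F i)]
  [AddCommMonoid A] {θ : Q₀ → A}
  {φ : ∀ a, E (t a) →ₗ[R] E (h a)} {ψ : ∀ a, F (t a) →ₗ[R] F (h a)} {f : ∀ i, E i →ₗ[R] F i}

theorem weight_range_add_weight_ker (θ : Q₀ → A) (f : ∀ i, E i →ₗ[R] F i) :
    weight θ (fun i => (f i).range) + weight θ (fun i => (f i).ker) =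
      weight θ (⊤ : ∀ i, Submodule R (E i)) := by
  simp only [weight, ← Finset.sum_add_distrib, ← add_smul,
    ← (f _).quotKerEquivRange.finrank_eq, Submodule.finrank_quotient_add_finrank, Pi.top_apply,
    finrank_top]

variable [PartialOrder A] [IsOrderedAddMonoid A]

theorem IsRepHom.weight_range_eq_zero_and_weight_ker_eq_zero (hf : IsRepHom φ ψ f)
    (hE : IsSemistable θ φ) (hF : IsSemistable θ ψ) :
    weight θ (fun i => (f i).range) = 0 ∧ weight θ (fun i => (f i).ker) = 0 :=
  (add_eq_zero_iff_of_nonneg (hF.weight_nonneg _ hf.isSubrep_range)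
    (hE.weight_nonneg _ hf.isSubrep_ker)).mp
    ((weight_range_add_weight_ker θ f).trans hE.weight_top)

theorem IsRepHom.injective_of_isStable_of_isSemistable (hf : IsRepHom φ ψ f)
    (hE : IsStable θ φ) (hF : IsSemistable θ ψ) (hf_ne : f ≠ 0) (i : Q₀) :
    Function.Injective (f i) := by
  have h_ker_ne_top : (fun i => (f i).ker) ≠ ⊤ := fun h_top =>
    hf_ne (funext fun i => LinearMap.ker_eq_top.mp (congrFun h_top i))
  have h_ker_bot := (hE.eq_bot_or_eq_top_of_weight_eq_zero hf.isSubrep_ker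
    (hf.weight_range_eq_zero_and_weight_ker_eq_zero hE.isSemistable hF).2).resolve_right
    h_ker_ne_top
  exact LinearMap.ker_eq_bot.mp (congrFun h_ker_bot i)

theorem IsRepHom.surjective_of_isSemistable_of_isStable (hf : IsRepHom φ ψ f)
    (hE : IsSemistable θ φ) (hF : IsStable θ ψ) (hf_ne : f ≠ 0) (i : Q₀) :
    Function.Surjective (f i) := by
  have h_range_ne_bot : (fun i => (f i).range) ≠ ⊥ := fun h_bot =>
    hf_ne (funext fun i => LinearMap.range_eq_bot.mp (congrFun h_bot i))
  have h_range_top := (hF.eq_bot_or_eq_top_of_weight_eq_zero hf.isSubrep_range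
    (hf.weight_range_eq_zero_and_weight_ker_eq_zero hE hF.isSemistable).1).resolve_left
    h_range_ne_bot
  exact LinearMap.range_eq_top.mp (congrFun h_range_top i)

end SchurLemma

end QuiverRep

open QuiverRep in
theorem nonzero_hom_between_stable_reps_is_iso_general.{u}
    {R Q₀ Q₁ A : Type*} [Ring R] [HasRankNullity.{u} R] [StrongRankCondition R] [Fintype Q₀]
    [AddCommMonoid A] [PartialOrder A] [IsOrderedAddMonoid A] {t h : Q₁ → Q₀} {θ : Q₀ → A}
    {E : Q₀ → Type u} [∀ i, AddCommGroup (E i)] [∀ i, Module R (E i)]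
    [∀ i, Module.Finite R (E i)]
    {F : Q₀ → Type*} [∀ i, AddCommGroup (F i)] [∀ i, Module R (F i)]
    [∀ i, Module.Finite R (F i)]
    {φ : ∀ a, E (t a) →ₗ[R] E (h a)} {ψ : ∀ a, F (t a) →ₗ[R] F (h a)}
    (hE : IsStable θ φ) (hF : IsStable θ ψ)
    {f : ∀ i, E i →ₗ[R] F i} (hf : IsRepHom φ ψ f) (hf_ne : f ≠ 0) (i : Q₀) :
    Function.Bijective (f i) :=
  have := nontrivial_of_invariantBasisNumber R
  ⟨hf.injective_of_isStable_of_isSemistable hE hF.isSemistable hf_ne i,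
    hf.surjective_of_isSemistable_of_isStable hE.isSemistable hF hf_ne i⟩

/-- If `E` and `F` are θ-stable representations of a quiver `Q`
(with finite vertex set `Q0`, finite arrow set `Q1`, tail map `t` and head map `h`)
over a field `k`, then every nonzero morphism of representations `f : E → F`
is an isomorphism, i.e. each component `f i` is bijective. -/
theorem nonzero_hom_between_stable_reps_is_iso
    {k : Type*} [Field k] {Q0 Q1 : Type*} [Fintype Q0] [Fintype Q1]
    (t h : Q1 → Q0) (θ : Q0 → ℝ)
    (E : Q0 → Type*) [∀ i, AddCommGroup (E i)] [∀ i, Module k (E i)]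
    [∀ i, FiniteDimensional k (E i)]
    (F : Q0 → Type*) [∀ i, AddCommGroup (F i)] [∀ i, Module k (F i)]
    [∀ i, FiniteDimensional k (F i)]
    (φ : ∀ a : Q1, E (t a) →ₗ[k] E (h a))
    (ψ : ∀ a : Q1, F (t a) →ₗ[k] F (h a))
    (hEsum : ∑ i : Q0, θ i * (Module.finrank k (E i) : ℝ) = 0)
    (hFsum : ∑ i : Q0, θ i * (Module.finrank k (F i) : ℝ) = 0)
    (hEstable : ∀ E' : ∀ i : Q0, Submodule k (E i),
      (∀ a : Q1, (E' (t a)).map (φ a) ≤ E' (h a)) →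
      E' ≠ (fun _ => ⊥) → E' ≠ (fun _ => ⊤) →
      0 < ∑ i : Q0, θ i * (Module.finrank k (E' i) : ℝ))
    (hFstable : ∀ F' : ∀ i : Q0, Submodule k (F i),
      (∀ a : Q1, (F' (t a)).map (ψ a) ≤ F' (h a)) →
      F' ≠ (fun _ => ⊥) → F' ≠ (fun _ => ⊤) →
      0 < ∑ i : Q0, θ i * (Module.finrank k (F' i) : ℝ))
    (f : ∀ i : Q0, E i →ₗ[k] F i)
    (hf : ∀ a : Q1, (f (h a)).comp (φ a) = (ψ a).comp (f (t a)))
    (hfne : f ≠ 0) :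
    ∀ i : Q0, Function.Bijective (f i) :=
  nonzero_hom_between_stable_reps_is_iso_general
    (QuiverRep.isStable_iff_sum_mul_finrank.mpr ⟨hEsum, hEstable⟩)
    (QuiverRep.isStable_iff_sum_mul_finrank.mpr ⟨hFsum, hFstable⟩) hf hfne
end

section
/- Let Q be a quiver with finitely many vertices and finitely many arrows, k a field, and W = (W_i, φ_a) a representation of Q over k. Then for every vertex j ∈ Q₀ the sequence of k-linear maps 0 → ⊕_{a∈Q₁} k⟨Path(h(a), j)⟩ ⊗_k W_{t(a)} →^d ⊕_{i∈Q₀} k⟨Path(i, j)⟩ ⊗_k W_i →^μ W_j → 0 is exact, where μ(p ⊗ w) = φ_p(w), and where for an arrow a, a path p from h(a) to j, and w ∈ W_{t(a)}, d(p ⊗ w) = (p∘a) ⊗ w − p ⊗ φ_a(w), with p∘a denoting the path from t(a) to j obtained by first traversing a and then p. (This is the fiberwise form of the universal projective resolution of the universal representation, obtained from the standard projective bimodule resolution of the path algebra kQ.) -/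
open scoped TensorProduct

/-- The composite linear map `φ_p : W i →ₗ[k] W j` attached to a path `p` from `i`
to `j` in a quiver, built from the structure maps `φ` of a representation `W`;
the empty path gives the identity. -/
def pathMap {k : Type*} [Field k] {V : Type*} [Quiver V]
    (W : V → Type*) [∀ i, AddCommGroup (W i)] [∀ i, Module k (W i)]
    (φ : ∀ ⦃i j : V⦄, (i ⟶ j) → (W i →ₗ[k] W j)) :
    ∀ {i j : V}, Quiver.Path i j → (W i →ₗ[k] W j)
  | _, _, Quiver.Path.nil => LinearMap.id
  | _, _, Quiver.Path.cons p a => (φ a).comp (pathMap W φ p)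

/-!
The augmented complex is contractible. Cutting a path `p` from `i` to `j` at each of its arrows `b`,
`p = q ∘ b ∘ p'`, define `h (p ⊗ w) = ∑ q ⊗ φ_{p'} w`, the term of `b` lying in the summand of `b`.
Under the differential this sum telescopes to `p ⊗ w - e_j ⊗ φ_p w`, where `e_j` is the empty path.
Peeling off the first arrow gives `h ((p ∘ a) ⊗ w) = p ⊗ w + h (p ⊗ φ_a w)`, with `p ⊗ w` in the
summand of `a`. So `h` and `w ↦ e_j ⊗ w` form a contracting homotopy.
-/

open scoped DirectSum

/-- The module `⨁ i, k⟨P i⟩ ⊗ M i`, of which both terms of the standard resolution are instances: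
for `i` ranging over vertices, and for `i` ranging over arrows. It is a `def`, so that instance
search does not descend into the tensor products. -/
def FreeTensorSum (k : Type*) [CommSemiring k] {ι : Type*} (P : ι → Type*) (M : ι → Type*)
    [∀ i, AddCommMonoid (M i)] [∀ i, Module k (M i)] : Type _ :=
  ⨁ i, (P i →₀ k) ⊗[k] M i

namespace FreeTensorSum

section Instances

variable {k : Type*} {ι : Type*} {P : ι → Type*} {M : ι → Type*} [∀ i, AddCommMonoid (M i)]

noncomputable instance [CommSemiring k] [∀ i, Module k (M i)] :
    AddCommMonoid (FreeTensorSum k P M) :=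
  inferInstanceAs (AddCommMonoid (⨁ i, (P i →₀ k) ⊗[k] M i))

noncomputable instance [CommSemiring k] [∀ i, Module k (M i)] : Module k (FreeTensorSum k P M) :=
  inferInstanceAs (Module k (⨁ i, (P i →₀ k) ⊗[k] M i))

-- Negation is scalar multiplication by `-1`, which keeps the underlying additive monoid that of the
-- first instance on the nose.
noncomputable instance [CommRing k] [∀ i, Module k (M i)] : AddCommGroup (FreeTensorSum k P M) :=
  Module.addCommMonoidToAddCommGroup k

end Instances

variable (k : Type*) [CommSemiring k] {ι : Type*} [DecidableEq ι] {P : ι → Type*}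
  (M : ι → Type*) [∀ i, AddCommMonoid (M i)] [∀ i, Module k (M i)]
  {N : Type*} [AddCommMonoid N] [Module k N]

/-- The inclusion `m ↦ p ⊗ m` of the copy of `M i` labelled by the basis element `p : P i`. -/
noncomputable def of (i : ι) (p : P i) : M i →ₗ[k] FreeTensorSum k P M :=
  DirectSum.lof k ι (fun i => (P i →₀ k) ⊗[k] M i) i ∘ₗ
    TensorProduct.mk k (P i →₀ k) (M i) (Finsupp.single p 1)

variable {k M}

theorem hom_ext {f g : FreeTensorSum k P M →ₗ[k] N}
    (h : ∀ i (p : P i), f ∘ₗ of k M i p = g ∘ₗ of k M i p) : f = g :=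
  DirectSum.linearMap_ext k fun i => TensorProduct.ext <| Finsupp.lhom_ext' fun p =>
    LinearMap.ext_ring <| h i p

/-- The universal property of `⨁ i, k⟨P i⟩ ⊗ M i`: the linear map sending `p ⊗ m` to `f i p m`. -/
noncomputable def lift (f : ∀ i, P i → M i →ₗ[k] N) : FreeTensorSum k P M →ₗ[k] N :=
  DirectSum.toModule k ι N fun i => TensorProduct.lift (Finsupp.linearCombination k (f i))

theorem lift_comp_of (f : ∀ i, P i → M i →ₗ[k] N) (i : ι) (p : P i) :
    lift f ∘ₗ of k M i p = f i p := by
  ext m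
  calc (lift f ∘ₗ of k M i p) m
      = TensorProduct.lift (Finsupp.linearCombination k (f i)) (Finsupp.single p 1 ⊗ₜ[k] m) :=
        DirectSum.toModule_lof (φ := fun i =>
          TensorProduct.lift (Finsupp.linearCombination k (f i))) k i _
    _ = f i p m := by
        rw [TensorProduct.lift.tmul, Finsupp.linearCombination_single, one_smul]

variable (k P M) in
/-- Over a finite index set the direct sum is the product. -/
noncomputable def equivPi [Fintype ι] :
    FreeTensorSum k P M ≃ₗ[k] ∀ i, (P i →₀ k) ⊗[k] M i :=
  DirectSum.linearEquivFunOnFintype k ι fun i => (P i →₀ k) ⊗[k] M i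

theorem equivPi_of [Fintype ι] (i : ι) (p : P i) (m : M i) :
    equivPi k P M (of k M i p m) = Pi.single i (Finsupp.single p 1 ⊗ₜ[k] m) :=
  DirectSum.linearEquivFunOnFintype_lof k i _

end FreeTensorSum

section PathAction

variable {V : Type*} [Quiver V]

/-- The composite `φ_p` along a path, as in `pathMap` but with scalars in an arbitrary semiring. -/
def pathAction {k : Type*} [Semiring k] {W : V → Type*} [∀ i, AddCommMonoid (W i)]
    [∀ i, Module k (W i)] (φ : ∀ ⦃i j : V⦄, (i ⟶ j) → (W i →ₗ[k] W j)) :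
    ∀ {i j : V}, Quiver.Path i j → (W i →ₗ[k] W j)
  | _, _, Quiver.Path.nil => LinearMap.id
  | _, _, Quiver.Path.cons p a => φ a ∘ₗ pathAction φ p

theorem pathMap_eq_pathAction {k : Type*} [Field k] {W : V → Type*} [∀ i, AddCommGroup (W i)]
    [∀ i, Module k (W i)] (φ : ∀ ⦃i j : V⦄, (i ⟶ j) → (W i →ₗ[k] W j)) {i j : V}
    (p : Quiver.Path i j) : pathMap W φ p = pathAction φ p := by
  induction p with
  | nil => rw [pathMap, pathAction]
  | cons p a ih => rw [pathMap, pathAction, ih]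

variable {k : Type*} [Semiring k] {W : V → Type*} [∀ i, AddCommMonoid (W i)]
  [∀ i, Module k (W i)] (φ : ∀ ⦃i j : V⦄, (i ⟶ j) → (W i →ₗ[k] W j))

theorem pathAction_toPath {i j : V} (a : i ⟶ j) : pathAction φ a.toPath = φ a := by
  rw [Quiver.Hom.toPath, pathAction, pathAction, LinearMap.comp_id]

theorem pathAction_comp {i l j : V} (p : Quiver.Path i l) (q : Quiver.Path l j) :
    pathAction φ (p.comp q) = pathAction φ q ∘ₗ pathAction φ p := by
  induction q with
  | nil => rw [Quiver.Path.comp_nil, pathAction, LinearMap.id_comp]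
  | cons q b ih => rw [Quiver.Path.comp_cons, pathAction, ih, pathAction, LinearMap.comp_assoc]

end PathAction

namespace StandardResolution

open Quiver FreeTensorSum

section Terms

variable (k : Type*) [CommSemiring k] {V : Type*} [Quiver V]
  (W : V → Type*) [∀ i, AddCommMonoid (W i)] [∀ i, Module k (W i)] {j : V}

variable (j) in
/-- The degree-zero term `⨁ i, k⟨Path(i, j)⟩ ⊗ W i` of the standard resolution. -/
abbrev VertexTerm : Type _ := FreeTensorSum k (fun i : V => Path i j) W

variable (j) in
/-- The degree-one term `⨁ a, k⟨Path(h a, j)⟩ ⊗ W (t a)` of the standard resolution. -/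
abbrev ArrowTerm : Type _ :=
  FreeTensorSum k (fun s : Σ i l : V, i ⟶ l => Path s.2.1 j) (fun s => W s.1)

variable [DecidableEq V]

/-- The inclusion `w ↦ p ⊗ w` into the summand of the vertex `i` at which `p` starts. -/
noncomputable abbrev ofVertex {i : V} (p : Path i j) : W i →ₗ[k] VertexTerm k W j :=
  FreeTensorSum.of k W i p

/-- The inclusion `w ↦ p ⊗ w` into the summand of the arrow `a`. -/
noncomputable abbrev ofArrow [∀ i l : V, DecidableEq (i ⟶ l)] {i l : V} (a : i ⟶ l)
    (p : Path l j) : W i →ₗ[k] ArrowTerm k W j :=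
  FreeTensorSum.of k (fun s : Σ i l : V, i ⟶ l => W s.1) ⟨i, l, a⟩ p

end Terms

section Homotopy

variable {k : Type*} [CommSemiring k] {V : Type*} [Quiver V] [DecidableEq V] {j : V}
  {W : V → Type*} [∀ i, AddCommMonoid (W i)] [∀ i, Module k (W i)]
  (φ : ∀ ⦃i j : V⦄, (i ⟶ j) → (W i →ₗ[k] W j))

variable (j) in
/-- The map `μ : p ⊗ w ↦ φ_p w` of the standard resolution. -/
noncomputable def augmentation : VertexTerm k W j →ₗ[k] W j :=
  lift fun _ p => pathAction φ p

theorem augmentation_comp_ofVertex {i : V} (p : Path i j) :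
    augmentation j φ ∘ₗ ofVertex k W p = pathAction φ p := by
  rw [augmentation, lift_comp_of]

theorem augmentation_comp_ofVertex_nil :
    augmentation j φ ∘ₗ ofVertex k W Path.nil = LinearMap.id := by
  rw [augmentation_comp_ofVertex, pathAction]

theorem comp_equivPi_eq_augmentation [Fintype V]
    {μ : (∀ i : V, (Path i j →₀ k) ⊗[k] W i) →ₗ[k] W j}
    (hμ : ∀ (i : V) (p : Path i j) (w : W i),
      μ (Pi.single i (Finsupp.single p 1 ⊗ₜ[k] w)) = pathAction φ p w) :
    μ ∘ₗ equivPi k (fun i => Path i j) W = augmentation j φ := by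
  refine hom_ext fun i p => ?_
  rw [augmentation_comp_ofVertex]
  ext w
  simp only [LinearMap.comp_apply, LinearEquiv.coe_coe, equivPi_of, hμ]

variable [∀ i l : V, DecidableEq (i ⟶ l)]

/-- The sum of the terms `(q ∘ p'') ⊗ φ_{p'} w`, in the summand of `b`, over all factorizations
`p = p'' ∘ b ∘ p'` of the path `p` at one of its arrows `b`. The trailing path `q` accumulates the
arrows already removed from the end of `p`. -/
noncomputable def sumOverArrows : ∀ {i l : V}, Path i l → Path l j → (W i →ₗ[k] ArrowTerm k W j)
  | _, _, Path.nil, _ => 0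
  | _, _, Path.cons p b, q =>
      sumOverArrows p (b.toPath.comp q) + ofArrow k W b q ∘ₗ pathAction φ p

theorem sumOverArrows_toPath {i l : V} (a : i ⟶ l) (q : Path l j) :
    sumOverArrows φ a.toPath q = ofArrow k W a q := by
  rw [Hom.toPath, sumOverArrows, sumOverArrows, pathAction, zero_add, LinearMap.comp_id]

theorem sumOverArrows_comp {i l m : V} (p : Path i l) (q : Path l m) (r : Path m j) :
    sumOverArrows φ (p.comp q) r =
      sumOverArrows φ p (q.comp r) + sumOverArrows φ q r ∘ₗ pathAction φ p := by
  induction q with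
  | nil => simp only [Path.comp_nil, Path.nil_comp, sumOverArrows, LinearMap.zero_comp, add_zero]
  | cons q b ih =>
    have assoc : q.comp (b.toPath.comp r) = (q.cons b).comp r := (Path.comp_assoc q b.toPath r).symm
    simp only [Path.comp_cons, sumOverArrows, ih, assoc, pathAction_comp, LinearMap.add_comp,
      LinearMap.comp_assoc, add_assoc]

variable (j) in
/-- The contracting homotopy of the standard resolution into its degree-one term; the homotopy
into the degree-zero term is `ofVertex k W Path.nil`. -/
noncomputable def homotopy : VertexTerm k W j →ₗ[k] ArrowTerm k W j :=
  lift fun _ p => sumOverArrows φ p Path.nil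

theorem homotopy_comp_ofVertex {i : V} (p : Path i j) :
    homotopy j φ ∘ₗ ofVertex k W p = sumOverArrows φ p Path.nil := by
  rw [homotopy, lift_comp_of]

end Homotopy

section Exactness

variable {k : Type*} [CommRing k] {V : Type*} [Quiver V] [DecidableEq V]
  [∀ i l : V, DecidableEq (i ⟶ l)] {j : V} {W : V → Type*} [∀ i, AddCommGroup (W i)]
  [∀ i, Module k (W i)] (φ : ∀ ⦃i j : V⦄, (i ⟶ j) → (W i →ₗ[k] W j))

variable (j) in
/-- The map `d : p ⊗ w ↦ (p ∘ a) ⊗ w - p ⊗ φ_a w` of the standard resolution. -/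
noncomputable def differential : ArrowTerm k W j →ₗ[k] VertexTerm k W j :=
  lift fun s p => ofVertex k W (s.2.2.toPath.comp p) - ofVertex k W p ∘ₗ φ s.2.2

theorem differential_comp_ofArrow {i l : V} (a : i ⟶ l) (p : Path l j) :
    differential j φ ∘ₗ ofArrow k W a p =
      ofVertex k W (a.toPath.comp p) - ofVertex k W p ∘ₗ φ a := by
  rw [differential, lift_comp_of]

theorem augmentation_comp_differential : augmentation j φ ∘ₗ differential j φ = 0 := by
  refine hom_ext fun ⟨_, _, a⟩ p => ?_
  rw [LinearMap.comp_assoc, differential_comp_ofArrow, LinearMap.comp_sub, ← LinearMap.comp_assoc,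
    augmentation_comp_ofVertex, augmentation_comp_ofVertex, pathAction_comp, pathAction_toPath,
    sub_self, LinearMap.zero_comp]

theorem differential_comp_sumOverArrows {i l : V} (p : Path i l) (q : Path l j) :
    differential j φ ∘ₗ sumOverArrows φ p q =
      ofVertex k W (p.comp q) - ofVertex k W q ∘ₗ pathAction φ p := by
  induction p with
  | nil => simp only [sumOverArrows, pathAction, Path.nil_comp, LinearMap.comp_zero,
      LinearMap.comp_id, sub_self]
  | cons p b ih =>
    have assoc : p.comp (b.toPath.comp q) = (p.cons b).comp q := (Path.comp_assoc p b.toPath q).symm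
    rw [sumOverArrows, LinearMap.comp_add, ih, ← LinearMap.comp_assoc, differential_comp_ofArrow,
      LinearMap.sub_comp, sub_add_sub_cancel, assoc, pathAction, LinearMap.comp_assoc]

theorem homotopy_comp_differential : homotopy j φ ∘ₗ differential j φ = LinearMap.id := by
  refine hom_ext fun ⟨_, _, a⟩ p => ?_
  rw [LinearMap.comp_assoc, differential_comp_ofArrow, LinearMap.comp_sub, ← LinearMap.comp_assoc,
    homotopy_comp_ofVertex, homotopy_comp_ofVertex, sumOverArrows_comp, pathAction_toPath,
    add_sub_cancel_right, Path.comp_nil, sumOverArrows_toPath, LinearMap.id_comp]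

theorem differential_comp_homotopy : differential j φ ∘ₗ homotopy j φ =
    LinearMap.id - ofVertex k W Path.nil ∘ₗ augmentation j φ := by
  refine hom_ext fun _ p => ?_
  rw [LinearMap.comp_assoc, homotopy_comp_ofVertex, differential_comp_sumOverArrows, Path.comp_nil,
    LinearMap.sub_comp, LinearMap.comp_assoc, augmentation_comp_ofVertex, LinearMap.id_comp]

theorem exact_differential_augmentation :
    Function.Exact (differential j φ) (augmentation j φ) := by
  refine LinearMap.exact_of_comp_eq_zero_of_ker_le_range (augmentation_comp_differential φ)
    fun x hx => ⟨homotopy j φ x, ?_⟩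
  have hdh := LinearMap.congr_fun (differential_comp_homotopy φ) x
  simpa only [LinearMap.comp_apply, LinearMap.sub_apply, LinearMap.id_apply,
    LinearMap.mem_ker.mp hx, map_zero, sub_zero] using hdh

theorem comp_equivPi_eq_equivPi_comp_differential [Fintype V] [∀ i l : V, Fintype (i ⟶ l)]
    {d : (∀ s : Σ i l : V, i ⟶ l, (Path s.2.1 j →₀ k) ⊗[k] W s.1) →ₗ[k]
      (∀ i : V, (Path i j →₀ k) ⊗[k] W i)}
    (hd : ∀ (i l : V) (a : i ⟶ l) (p : Path l j) (w : W i),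
      d (Pi.single (⟨i, l, a⟩ : Σ i l : V, i ⟶ l) (Finsupp.single p 1 ⊗ₜ[k] w)) =
        Pi.single i (Finsupp.single (a.toPath.comp p) 1 ⊗ₜ[k] w) -
          Pi.single l (Finsupp.single p 1 ⊗ₜ[k] φ a w)) :
    d ∘ₗ equivPi k (fun s : Σ i l : V, i ⟶ l => Path s.2.1 j) (fun s => W s.1) =
      equivPi k (fun i => Path i j) W ∘ₗ differential j φ := by
  refine hom_ext fun ⟨i, l, a⟩ p => ?_
  rw [LinearMap.comp_assoc, LinearMap.comp_assoc, differential_comp_ofArrow]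
  ext1 w
  simp only [LinearMap.comp_apply, LinearMap.sub_apply, LinearEquiv.coe_coe, map_sub, equivPi_of,
    hd]

end Exactness

end StandardResolution

theorem short_exact_of_ladder {R A B A' B' C : Type*} [Semiring R] [AddCommMonoid A]
    [AddCommMonoid B] [AddCommMonoid A'] [AddCommMonoid B'] [AddCommMonoid C] [Module R A]
    [Module R B] [Module R A'] [Module R B'] [Module R C] {f : A →ₗ[R] B} {g : B →ₗ[R] C}
    {f' : A' →ₗ[R] B'} {g' : B' →ₗ[R] C} (e₁ : A ≃ₗ[R] A') (e₀ : B ≃ₗ[R] B')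
    (hf : f' ∘ₗ e₁ = e₀ ∘ₗ f) (hg : g' ∘ₗ e₀ = g)
    (h : Function.Injective f ∧ LinearMap.range f = LinearMap.ker g ∧ Function.Surjective g) :
    Function.Injective f' ∧ LinearMap.range f' = LinearMap.ker g' ∧ Function.Surjective g' := by
  subst hg
  obtain ⟨hinj, hexact, hsurj⟩ := h
  refine ⟨?_, ?_, .of_comp hsurj⟩
  · rw [← EquivLike.injective_comp e₁, ← LinearEquiv.coe_coe, ← LinearMap.coe_comp, hf]
    exact e₀.injective.comp hinj
  · rw [← LinearEquiv.range_comp e₁ f', hf, LinearMap.range_comp, hexact, LinearMap.ker_comp,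
      Submodule.map_comap_eq_of_surjective e₀.surjective]

open StandardResolution in
theorem standard_resolution_of_quiver_rep_exact_general
    {k : Type*} [CommRing k] {V : Type*} [Quiver V]
    [DecidableEq V] [∀ i j : V, DecidableEq (i ⟶ j)]
    {W : V → Type*} [∀ i, AddCommGroup (W i)] [∀ i, Module k (W i)]
    (φ : ∀ ⦃i j : V⦄, (i ⟶ j) → (W i →ₗ[k] W j)) (j : V) :
    Function.Injective (differential j φ) ∧
      LinearMap.range (differential j φ) = LinearMap.ker (augmentation j φ) ∧
      Function.Surjective (augmentation j φ) :=
  ⟨LinearMap.injective_of_comp_eq_id _ _ (homotopy_comp_differential φ),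
    (exact_differential_augmentation φ).linearMap_ker_eq.symm,
    LinearMap.surjective_of_comp_eq_id _ _ (augmentation_comp_ofVertex_nil φ)⟩

/-- For a quiver `Q` with finitely many vertices and arrows, a field
`k`, a representation `W = (W i, φ a)` of `Q` over `k`, and a vertex `j`, the
sequence
`0 → ⊕_{a∈Q₁} k⟨Path(h a, j)⟩ ⊗ W (t a) →^d ⊕_{i∈Q₀} k⟨Path(i, j)⟩ ⊗ W i →^μ W j → 0`
is exact, where `μ (p ⊗ w) = φ_p w` and
`d (p ⊗ w) = (p ∘ a) ⊗ w − p ⊗ φ_a w` for an arrow `a` and a path `p` starting at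
the head of `a`.  Here `k⟨Path(i,j)⟩ = Quiver.Path i j →₀ k` is the vector space
with basis the paths from `i` to `j`, the direct sums are realized as (finite)
products, and the arrows are indexed by the sigma type `Σ i' j' : V, i' ⟶ j'`. -/
theorem standard_resolution_of_quiver_rep_exact
    {k : Type*} [Field k] {V : Type*} [Quiver V]
    [Fintype V] [DecidableEq V]
    [∀ i j : V, Fintype (i ⟶ j)] [∀ i j : V, DecidableEq (i ⟶ j)]
    (W : V → Type*) [∀ i, AddCommGroup (W i)] [∀ i, Module k (W i)]
    (φ : ∀ ⦃i j : V⦄, (i ⟶ j) → (W i →ₗ[k] W j)) (j : V)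
    (μ : (∀ i : V, (Quiver.Path i j →₀ k) ⊗[k] W i) →ₗ[k] W j)
    (hμ : ∀ (i : V) (p : Quiver.Path i j) (w : W i),
      μ (Pi.single i (Finsupp.single p (1 : k) ⊗ₜ[k] w)) = pathMap W φ p w)
    (d : (∀ s : Σ i' j' : V, i' ⟶ j',
            (Quiver.Path s.2.1 j →₀ k) ⊗[k] W s.1) →ₗ[k]
         (∀ i : V, (Quiver.Path i j →₀ k) ⊗[k] W i))
    (hd : ∀ (i' j' : V) (a : i' ⟶ j') (p : Quiver.Path j' j) (w : W i'),
      d (Pi.single (⟨i', j', a⟩ : Σ i' j' : V, i' ⟶ j')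
          (Finsupp.single p (1 : k) ⊗ₜ[k] w)) =
        Pi.single i' (Finsupp.single ((Quiver.Hom.toPath a).comp p) (1 : k) ⊗ₜ[k] w)
          - Pi.single j' (Finsupp.single p (1 : k) ⊗ₜ[k] (φ a w))) :
    Function.Injective d ∧ LinearMap.range d = LinearMap.ker μ ∧
      Function.Surjective μ := by
  have hμ' (i : V) (p : Quiver.Path i j) (w : W i) :
      μ (Pi.single i (Finsupp.single p 1 ⊗ₜ[k] w)) = pathAction φ p w := by
    rw [hμ, pathMap_eq_pathAction]
  exact short_exact_of_ladder _ _
    (StandardResolution.comp_equivPi_eq_equivPi_comp_differential φ hd)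
    (StandardResolution.comp_equivPi_eq_augmentation φ hμ')
    (standard_resolution_of_quiver_rep_exact_general φ j)
end
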